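/- Let k, q, r be natural numbers with q ≥ k+1, q ≥ 3, r ≥ k-1, and r ≥ 1. Then the path P_{q+r} and the disjoint union C_q + P_r have the same k-deck. -/

import Mathlib

open SimpleGraph

/-- `SameDeck G G' k`: `G` and `G'` have the same `k`-deck, i.e. for every simple graph `H`
on `k` vertices, the number of `k`-element vertex subsets of `G` inducing a subgraph
isomorphic to `H` equals the corresponding number for `G'`. -/
def SameDeck {V W : Type*} [Fintype V] [Fintype W]
    (G : SimpleGraph V) (G' : SimpleGraph W) (k : ℕ) : Prop :=
  ∀ H : SimpleGraph (Fin k),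
    Set.ncard {s : Finset V | s.card = k ∧ Nonempty ((G.induce (↑s : Set V)) ≃g H)} =
    Set.ncard {s : Finset W | s.card = k ∧ Nonempty ((G'.induce (↑s : Set W)) ≃g H)}

/-- `copies G H = s(G,H)`, the number of vertex subsets of `G` whose induced subgraph is
isomorphic to `H`. -/
noncomputable def copies {V W : Type*} [Fintype V]
    (G : SimpleGraph V) (H : SimpleGraph W) : ℕ :=
  Set.ncard {s : Finset V | Nonempty ((G.induce (↑s : Set V)) ≃g H)}

/-- The connected component `c` of `G` is a path on `m` vertices. -/
def CompIsPath {V : Type*} (G : SimpleGraph V) (c : G.ConnectedComponent) (m : ℕ) : Prop :=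
  Nonempty ((G.induce c.supp) ≃g pathGraph m)

/-- The connected component `c` of `G` is a cycle on `m` vertices (`m ≥ 3`). -/
def CompIsCycle {V : Type*} (G : SimpleGraph V) (c : G.ConnectedComponent) (m : ℕ) : Prop :=
  3 ≤ m ∧ Nonempty ((G.induce c.supp) ≃g cycleGraph m)

/-- A linear forest: every connected component is a path. -/
def IsLinearForest {V : Type*} (G : SimpleGraph V) : Prop :=
  ∀ c : G.ConnectedComponent, ∃ m : ℕ, CompIsPath G c m

theorem aux_iso {V W : Type*} (G : SimpleGraph V) (G' : SimpleGraph W) (e : V ≃ W)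
    (s : Finset V) (h : ∀ x ∈ s, ∀ y ∈ s, G.Adj x y ↔ G'.Adj (e x) (e y)) :
    Nonempty ((G.induce (↑s : Set V)) ≃g (G'.induce (↑(s.map e.toEmbedding) : Set W))) := by
  refine ⟨⟨e.subtypeEquiv (fun a => by simp), ?_⟩⟩
  rintro ⟨x, hx⟩ ⟨y, hy⟩
  simpa using (h x (by simpa using hx) y (by simpa using hy)).symm

theorem aux_deck {V W : Type*} [Fintype V] [Fintype W]
    (G : SimpleGraph V) (G' : SimpleGraph W) (k : ℕ) (e : Finset V → V ≃ W)
    (h : ∀ s : Finset V, s.card = k → ∀ x ∈ s, ∀ y ∈ s, G.Adj x y ↔ G'.Adj (e s x) (e s y))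
    (hinj : ∀ s t : Finset V, s.card = k → t.card = k →
      s.map (e s).toEmbedding = t.map (e t).toEmbedding → s = t)
    (hsurj : ∀ t : Finset W, t.card = k → ∃ s : Finset V, s.card = k ∧
      s.map (e s).toEmbedding = t) : SameDeck G G' k := by
  intro H
  refine Set.ncard_congr (fun s _ => s.map (e s).toEmbedding) ?_ ?_ ?_
  · rintro s ⟨hs, ⟨i⟩⟩
    obtain ⟨j⟩ := aux_iso G G' (e s) s (h s hs)
    exact ⟨by simpa using hs, ⟨j.symm.trans i⟩⟩
  · rintro s t ⟨hs, _⟩ ⟨ht, _⟩ hst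
    exact hinj s t hs ht hst
  · rintro t ⟨ht, ⟨i⟩⟩
    obtain ⟨s, hs, rfl⟩ := hsurj t ht
    obtain ⟨j⟩ := aux_iso G G' (e s) s (h s hs)
    exact ⟨s, ⟨hs, ⟨j.trans i⟩⟩, rfl⟩

theorem aux_cycle (q : ℕ) (hq : 3 ≤ q) (a b : Fin q) : (cycleGraph q).Adj a b ↔
    (a.val + 1 = b.val ∨ b.val + 1 = a.val ∨ (a.val = 0 ∧ b.val + 1 = q) ∨
      (b.val = 0 ∧ a.val + 1 = q)) := by
  have ha := a.2
  have hb := b.2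
  have key : ∀ a b : Fin q, (a - b).val = if b.val ≤ a.val then a.val - b.val
      else q + a.val - b.val := by
    intro a b
    have ha := a.2
    have hb := b.2
    rw [Fin.val_sub]
    split_ifs with h
    · rw [show q - b.val + a.val = (a.val - b.val) + q by omega, Nat.add_mod_right,
        Nat.mod_eq_of_lt (by omega)]
    · rw [Nat.mod_eq_of_lt (by omega)]; omega
  rw [cycleGraph_adj', key, key]
  split_ifs <;> omega

/-- swap of the prefixes of length `i` -/
def swp (q r i : ℕ) : Fin q ⊕ Fin r → Fin q ⊕ Fin r
  | Sum.inl a => if h : a.val < i ∧ a.val < r then Sum.inr ⟨a.val, h.2⟩ else Sum.inl a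
  | Sum.inr b => if h : b.val < i ∧ b.val < q then Sum.inl ⟨b.val, h.2⟩ else Sum.inr b

theorem swp_invol (q r i : ℕ) : Function.Involutive (swp q r i) := by
  rintro (a | b)
  · have := a.2
    by_cases h : a.val < i ∧ a.val < r <;> simp [swp, h]
  · have := b.2
    by_cases h : b.val < i ∧ b.val < q <;> simp [swp, h]

/-- admissible cutting index -/
def Cut (q r : ℕ) (s : Finset (Fin q ⊕ Fin r)) (i : ℕ) : Prop :=
  i + 1 ≤ q ∧ i ≤ r + 1 ∧ (i = 0 → ∀ a : Fin q, a.val + 1 = q → Sum.inl a ∉ s) ∧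
  (∀ a : Fin q, a.val + 1 = i → Sum.inl a ∉ s) ∧ (∀ b : Fin r, b.val + 1 = i → Sum.inr b ∉ s)

theorem cut_exists (q r k : ℕ) (hq : k + 1 ≤ q) (hr : k - 1 ≤ r) (s : Finset (Fin q ⊕ Fin r))
    (hs : s.card = k) : ∃ i, Cut q r s i := by
  by_contra hcon
  push Not at hcon
  let f : Fin q ⊕ Fin r → ℕ := Sum.elim (fun a => if a.val + 1 = q then 0 else a.val + 1)
    (fun b => b.val + 1)
  have hsub : Finset.range (k + 1) ⊆ s.image f := by
    intro i hi
    have hi' : i < k + 1 := by simpa using hi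
    by_contra hni
    have hf : ∀ x ∈ s, f x ≠ i := fun x hx h => hni (Finset.mem_image.2 ⟨x, hx, h⟩)
    refine hcon i ⟨by omega, by omega, ?_, ?_, ?_⟩
    · intro h0 a ha hm
      exact hf _ hm (by simp [f, ha, h0])
    · intro a ha hm
      exact hf _ hm (by simp only [f, Sum.elim_inl]; split_ifs <;> omega)
    · intro b hb hm
      exact hf _ hm (by simp [f, hb])
  have := (Finset.card_le_card hsub).trans Finset.card_image_le
  simp at this
  omega

/-- least admissible cutting index -/
noncomputable def idx (q r : ℕ) (s : Finset (Fin q ⊕ Fin r)) : ℕ := sInf {i | Cut q r s i}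

/-- the prefix swap as an equivalence -/
noncomputable def sw (q r : ℕ) (s : Finset (Fin q ⊕ Fin r)) : (Fin q ⊕ Fin r) ≃ (Fin q ⊕ Fin r) :=
  (swp_invol q r (idx q r s)).toPerm

theorem mem_map_swp (q r i : ℕ) (s : Finset (Fin q ⊕ Fin r)) (x : Fin q ⊕ Fin r) :
    x ∈ s.map ((swp_invol q r i).toPerm).toEmbedding ↔ swp q r i x ∈ s := by
  rw [Finset.mem_map_equiv]
  rfl

theorem cut_swp_mp (q r i j : ℕ) (hi : i + 1 ≤ q) (hj : j ≤ i) (s : Finset (Fin q ⊕ Fin r))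
    (h : Cut q r s j) : Cut q r (s.map ((swp_invol q r i).toPerm).toEmbedding) j := by
  obtain ⟨h1, h2, h3, h4, h5⟩ := h
  refine ⟨h1, h2, ?_, ?_, ?_⟩
  · intro h0 a ha
    rw [mem_map_swp, swp, dif_neg (by omega)]
    exact h3 h0 a ha
  · intro a ha
    rw [mem_map_swp, swp]
    split_ifs with hc
    · exact h5 _ ha
    · exact h4 _ ha
  · intro b hb
    rw [mem_map_swp, swp, dif_pos (by omega)]
    exact h4 _ hb

theorem cut_swp (q r i j : ℕ) (hi : i + 1 ≤ q) (hj : j ≤ i) (s : Finset (Fin q ⊕ Fin r)) :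
    Cut q r (s.map ((swp_invol q r i).toPerm).toEmbedding) j ↔ Cut q r s j := by
  refine ⟨fun h => ?_, cut_swp_mp q r i j hi hj s⟩
  have h' := cut_swp_mp q r i j hi hj _ h
  convert h' using 1
  ext x
  rw [mem_map_swp, mem_map_swp, swp_invol]

theorem idx_swp (q r : ℕ) (s : Finset (Fin q ⊕ Fin r)) (h : ∃ i, Cut q r s i) :
    idx q r (s.map (sw q r s).toEmbedding) = idx q r s := by
  have h1 : Cut q r s (idx q r s) := Nat.sInf_mem h
  have h2 := (cut_swp q r _ _ h1.1 le_rfl s).2 h1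
  have h3 : idx q r (s.map (sw q r s).toEmbedding) ≤ idx q r s := Nat.sInf_le h2
  refine le_antisymm h3 ?_
  have h4 : Cut q r (s.map (sw q r s).toEmbedding) (idx q r (s.map (sw q r s).toEmbedding)) :=
    Nat.sInf_mem (s := {i | Cut q r (s.map (sw q r s).toEmbedding) i}) ⟨_, h2⟩
  exact Nat.sInf_le ((cut_swp q r _ _ h1.1 h3 s).1 h4)

theorem sw_sw (q r : ℕ) (s : Finset (Fin q ⊕ Fin r)) (h : ∃ i, Cut q r s i) :
    (s.map (sw q r s).toEmbedding).map (sw q r (s.map (sw q r s).toEmbedding)).toEmbedding = s := by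
  ext x
  have := idx_swp q r s h
  conv_lhs => rw [sw, mem_map_swp, this, sw, mem_map_swp, swp_invol]

theorem sw_adj (q r i : ℕ) (hq : 3 ≤ q) (s : Finset (Fin q ⊕ Fin r)) (h : Cut q r s i)
    (x y : Fin q ⊕ Fin r) (hx : x ∈ s) (hy : y ∈ s) :
    (pathGraph (q + r)).Adj (finSumFinEquiv x) (finSumFinEquiv y) ↔
    (cycleGraph q ⊕g pathGraph r).Adj (swp q r i x) (swp q r i y) := by
  obtain ⟨h1, h2, h3, h4, h5⟩ := h
  have hl : ∀ a : Fin q, Sum.inl a ∈ s → a.val + 1 ≠ i ∧ (i = 0 → a.val + 1 ≠ q) :=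
    fun a ha => ⟨fun h => h4 a h ha, fun h0 h => h3 h0 a h ha⟩
  have hr : ∀ b : Fin r, Sum.inr b ∈ s → b.val + 1 ≠ i := fun b hb h => h5 b h hb
  rcases x with x | x <;> rcases y with y | y
  all_goals
    have hx2 := x.2
    have hy2 := y.2
    first
    | have hx1 := hl x hx
    | have hx1 := hr x hx
    first
    | have hy1 := hl y hy
    | have hy1 := hr y hy
    simp only [swp, pathGraph_adj]
    split_ifs <;> simp [pathGraph_adj, aux_cycle q hq] <;> omega

theorem main_aux (k q r : ℕ) (hq : k + 1 ≤ q) (hq3 : 3 ≤ q) (hr : k - 1 ≤ r) :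
    SameDeck ((pathGraph (q + r)).comap finSumFinEquiv) (cycleGraph q ⊕g pathGraph r) k := by
  refine aux_deck _ _ k (sw q r) ?_ ?_ ?_
  · intro s hs x hx y hy
    exact sw_adj q r _ hq3 s (Nat.sInf_mem (cut_exists q r k hq hr s hs)) x y hx hy
  · intro s t hs ht hst
    rw [← sw_sw q r s (cut_exists q r k hq hr s hs), ← sw_sw q r t (cut_exists q r k hq hr t ht),
      hst]
  · intro t ht
    exact ⟨_, by simpa using ht, sw_sw q r t (cut_exists q r k hq hr t ht)⟩

/-- If `q ≥ k+1`, `q ≥ 3`, `r ≥ k-1` and `r ≥ 1`, then `P_{q+r}` and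
`C_q + P_r` have the same `k`-deck. -/
theorem stmt_3 (k q r : ℕ) (hq : k + 1 ≤ q) (hq3 : 3 ≤ q) (hr : k - 1 ≤ r) (hr1 : 1 ≤ r) :
    SameDeck (pathGraph (q + r)) (cycleGraph q ⊕g pathGraph r) k := by
  intro H
  rw [← main_aux k q r hq hq3 hr H]
  refine aux_deck _ _ k (fun _ => finSumFinEquiv.symm) ?_ ?_ ?_ H
  · intro s _ x _ y _
    simp
  · intro s t _ _ hst
    exact Finset.map_injective _ hst
  · intro t ht
    exact ⟨t.map finSumFinEquiv.toEmbedding, by simpa using ht, by ext x; simp⟩
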